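/- Let L : ℕ → ℝ be the sequence such that for every l ≥ 0, Σ_{k=2}^{N} Λ(k)(log k)^l / k − (log N)^{l+1}/(l+1) → L_l as N → ∞. Then for every integer n ≥ 1, λ_n = 1 − (n/2)(γ + log(4π)) − Σ_{l=1}^{n} C(n,l) ((−1)^{l−1}/(l−1)!) L_{l−1} + Σ_{j=2}^{n} (−1)^j C(n,j) (1 − 2^{−j}) ζ(j), where ζ(j) = Σ_{m≥1} m^{−j}; in particular λ_n is real. (The explicit arithmetic formula of Theorem 2.2 specialized to F = ζ, with m_ζ = 1, Q_ζ = π^{−1/2}, r = 1, λ_1 = 1/2, μ_1 = 0: the Bombieri–Lagarias formula.) -/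

import Mathlib

/-!
Near `s = 1` the xi function factors as `ξ(s) = s · Γ_ℝ(s) · ζ₁(s)`, where `ζ₁(s) = (s - 1) ζ(s)`
is entire. By the Leibniz rule `λ_n` is a linear functional of the derivatives of `ξ'/ξ` at `1`, so
it is the sum of the contributions of the three factors. The factor `s` contributes `1`. The
factor `Γ_ℝ` is governed by the series of the digamma function, which yields `γ + log (4π)` and sums
over odd integers, that is `(1 - 2⁻ʲ) ζ(j)`. For `ζ₁`, and `σ > 0`,
`(ζ₁'/ζ₁)^(l) (1 + σ) = (-1)^(l + 1) (∑ Λ(k) (log k)^l k^(-1 - σ) - l! / σ^(l + 1))`.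
The bracket is `σ` times the Laplace transform of
`t ↦ ∑_{k ≤ e^t} Λ(k) (log k)^l / k - t^(l + 1) / (l + 1)`, which tends to `L_l` as `t → ∞`, so by
the final value theorem the bracket tends to `L_l` as `σ → 0⁺`.
-/

open Complex Finset Filter Topology

/-- The Riemann xi function `ξ(s) = s(s-1)π^{-s/2}Γ(s/2)ζ(s)`, written as the entire
function `s(s-1)Λ₀(s) + 1` where `Λ₀` is the completed Riemann zeta function. -/
noncomputable def riemannXi (s : ℂ) : ℂ := s * (s - 1) * completedRiemannZeta₀ s + 1

/-- The `n`-th Li coefficient `λ_n = (1/(n-1)!) dⁿ/dsⁿ [s^{n-1} log ξ(s)]` at `s = 1`. -/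
noncomputable def liCoeff (n : ℕ) : ℂ :=
  (1 / ((n - 1).factorial : ℂ)) *
    iteratedDeriv n (fun s => s ^ (n - 1) * Complex.log (riemannXi s)) 1

/-! ### The digamma function -/

section RealGamma

variable {x y : ℝ}

local notation "ψ" => deriv (Real.log ∘ Real.Gamma)

lemma differentiableAt_Gamma_of_pos (hx : 0 < x) : DifferentiableAt ℝ Real.Gamma x :=
  Real.differentiableAt_Gamma fun m => ((neg_nonpos.2 m.cast_nonneg).trans_lt hx).ne'

lemma differentiableAt_log_comp_Gamma (hx : 0 < x) :
    DifferentiableAt ℝ (Real.log ∘ Real.Gamma) x :=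
  (differentiableAt_Gamma_of_pos hx).log (Real.Gamma_pos_of_pos hx).ne'

lemma log_comp_Gamma_add_one (hx : 0 < x) :
    (Real.log ∘ Real.Gamma) (x + 1) = Real.log x + (Real.log ∘ Real.Gamma) x := by
  simp only [Function.comp_apply, Real.Gamma_add_one hx.ne',
    Real.log_mul hx.ne' (Real.Gamma_pos_of_pos hx).ne']

lemma slope_log_comp_Gamma (hx : 0 < x) :
    slope (Real.log ∘ Real.Gamma) x (x + 1) = Real.log x := by
  rw [slope_def_field, log_comp_Gamma_add_one hx]
  simp

lemma deriv_log_comp_Gamma_add_one (hx : 0 < x) : ψ (x + 1) = x⁻¹ + ψ x := by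
  rw [← deriv_comp_add_const, ← Real.deriv_log,
    ← deriv_add (Real.differentiableAt_log hx.ne') (differentiableAt_log_comp_Gamma hx)]
  apply EventuallyEq.deriv_eq
  filter_upwards [eventually_gt_nhds hx] with z hz using log_comp_Gamma_add_one hz

lemma deriv_log_comp_Gamma_add_natCast (hx : 0 < x) (N : ℕ) :
    ψ (x + N) = ∑ m ∈ range N, (x + m)⁻¹ + ψ x := by
  induction N with
  | zero => simp
  | succ N ih =>
    rw [Nat.cast_succ, ← add_assoc, deriv_log_comp_Gamma_add_one (by positivity), ih,
      sum_range_succ]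
    ring

lemma deriv_log_comp_Gamma_le_log (hx : 0 < x) : ψ x ≤ Real.log x := by
  rw [← slope_log_comp_Gamma hx]
  exact Real.convexOn_log_Gamma.deriv_le_slope hx (by positivity : 0 < x + 1) (by simp)
    (differentiableAt_log_comp_Gamma hx)

lemma log_sub_inv_le_deriv_log_comp_Gamma (hx : 0 < x) :
    Real.log x - x⁻¹ ≤ ψ x := by
  have hx' : 0 < x + 1 := by positivity
  have h := Real.convexOn_log_Gamma.slope_le_deriv hx hx' (by simp)
    (differentiableAt_log_comp_Gamma hx')
  rw [slope_log_comp_Gamma hx, deriv_log_comp_Gamma_add_one hx] at h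
  linarith

lemma tendsto_deriv_log_comp_Gamma_sub_log :
    Tendsto (fun x => ψ x - Real.log x) atTop (𝓝 0) := by
  have hinv : Tendsto (fun x : ℝ => -x⁻¹) atTop (𝓝 0) := by
    simpa using (tendsto_inv_atTop_zero (𝕜 := ℝ)).neg
  refine tendsto_of_tendsto_of_tendsto_of_le_of_le' hinv tendsto_const_nhds ?_ ?_ <;>
    filter_upwards [eventually_gt_atTop 0] with x hx
  · linarith [log_sub_inv_le_deriv_log_comp_Gamma hx]
  · linarith [deriv_log_comp_Gamma_le_log hx]

lemma tendsto_sum_inv_sub_inv (hx : 0 < x) (hy : 0 < y) :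
    Tendsto (fun N : ℕ => ∑ m ∈ range N, ((y + m)⁻¹ - (x + m)⁻¹)) atTop
      (𝓝 (ψ x - ψ y)) := by
  have hψ {z : ℝ} : Tendsto (fun N : ℕ => ψ (z + N) - Real.log N) atTop (𝓝 0) := by
    have hz : Tendsto (fun N : ℕ => z + (N : ℝ)) atTop atTop :=
      tendsto_atTop_add_const_left _ _ tendsto_natCast_atTop_atTop
    have h := (tendsto_deriv_log_comp_Gamma_sub_log.comp hz).add
      ((Real.tendsto_log_comp_add_sub_log z).comp tendsto_natCast_atTop_atTop)
    simpa [Function.comp_def, add_comm] using h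
  have h := ((hψ (z := y)).sub (hψ (z := x))).add_const (ψ x - ψ y)
  rw [sub_zero, zero_add] at h
  refine h.congr fun N => ?_
  rw [deriv_log_comp_Gamma_add_natCast hx, deriv_log_comp_Gamma_add_natCast hy, sum_sub_distrib]
  ring

end RealGamma

lemma ne_neg_natCast_of_re_pos {s : ℂ} (hs : 0 < s.re) (m : ℕ) : s ≠ -m := by
  rintro rfl
  exact hs.not_ge (by simp)

lemma digamma_ofReal {x : ℝ} (hx : 0 < x) :
    digamma x = (deriv (Real.log ∘ Real.Gamma) x : ℝ) := by
  have hreal := (differentiableAt_Gamma_of_pos hx).hasDerivAt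
  have hcomplex := (differentiableAt_Gamma x (ne_neg_natCast_of_re_pos (by simpa))).hasDerivAt
  have hderiv : deriv Gamma (x : ℂ) = (deriv Real.Gamma x : ℝ) := by
    rw [← (funext Gamma_ofReal ▸ hcomplex.comp_ofReal.deriv :)]
    exact hreal.ofReal_comp.deriv
  rw [digamma_def, logDeriv_apply, hderiv, Gamma_ofReal, Function.comp_def,
    deriv.log hreal.differentiableAt (Real.Gamma_pos_of_pos hx).ne', ofReal_div]

lemma isOpen_setOf_lt_re (δ : ℝ) : IsOpen {z : ℂ | δ < z.re} :=
  isOpen_lt continuous_const continuous_re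

lemma add_natCast_ne_zero {s : ℂ} (hs : 0 < s.re) (m : ℕ) : s + m ≠ 0 := fun h =>
  ne_neg_natCast_of_re_pos hs m (eq_neg_of_add_eq_zero_left h)

lemma summable_inv_add_natCast_pow {δ : ℝ} (hδ : 0 < δ) {k : ℕ} (hk : 1 < k) :
    Summable fun m : ℕ => ((δ + m : ℝ) ^ k)⁻¹ := by
  refine ((Real.summable_one_div_nat_add_rpow δ k).2 (mod_cast hk)).congr fun m => ?_
  rw [abs_of_pos (by positivity), Real.rpow_natCast, one_div, add_comm]

lemma norm_inv_add_natCast_pow_le {δ : ℝ} (hδ : 0 < δ) {z : ℂ} (hz : δ < z.re) (m k : ℕ) :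
    ‖((z + m) ^ k)⁻¹‖ ≤ ((δ + m) ^ k)⁻¹ := by
  rw [norm_inv, norm_pow]
  gcongr
  calc δ + m ≤ (z + m).re := by simpa using hz.le
    _ ≤ ‖z + m‖ := re_le_norm _

lemma hasDerivAt_sub_inv_add_pow {𝕜 : Type*} [NontriviallyNormedField 𝕜] (c : 𝕜) {z a : 𝕜}
    (h : z + a ≠ 0) (k : ℕ) :
    HasDerivAt (fun z => c - ((z + a) ^ k)⁻¹) ((k : 𝕜) * ((z + a) ^ (k + 1))⁻¹) z := by
  refine (((((hasDerivAt_id' z).add_const a).pow k).inv (pow_ne_zero k h)).const_sub c).congr_deriv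
    ?_
  rcases k with _ | k
  · simp
  · field_simp
    simp [← pow_mul]
    ring

/- The constants `c m` renormalise the series, so that `k = 1` is covered as well. -/
lemma hasDerivAt_tsum_sub_inv_add_natCast_pow {c : ℕ → ℂ} {k : ℕ} (hk : k ≠ 0)
    (hc : Summable fun m : ℕ => c m - ((1 + m : ℂ) ^ k)⁻¹) {s : ℂ} (hs : 0 < s.re) :
    (Summable fun m : ℕ => c m - ((s + m) ^ k)⁻¹) ∧
      HasDerivAt (fun z : ℂ => ∑' m : ℕ, (c m - ((z + m) ^ k)⁻¹))
        (∑' m : ℕ, (k : ℂ) * ((s + m) ^ (k + 1))⁻¹) s := by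
  obtain ⟨δ, hδ, hδs⟩ := exists_between (lt_min hs one_pos)
  have hbound : Summable fun m : ℕ => (k : ℝ) * ((δ + m) ^ (k + 1))⁻¹ :=
    (summable_inv_add_natCast_pow hδ (by lia)).mul_left _
  have hpre : IsPreconnected {z : ℂ | δ < z.re} := (convex_halfSpace_re_gt δ).isPreconnected
  have hderiv (m : ℕ) (z : ℂ) (hz : δ < z.re) :
      HasDerivAt (fun z : ℂ => c m - ((z + m) ^ k)⁻¹) ((k : ℂ) * ((z + m) ^ (k + 1))⁻¹) z :=
    hasDerivAt_sub_inv_add_pow _ (add_natCast_ne_zero (hδ.trans hz) m) k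
  have hle (m : ℕ) (z : ℂ) (hz : δ < z.re) :
      ‖(k : ℂ) * ((z + m) ^ (k + 1))⁻¹‖ ≤ k * ((δ + m) ^ (k + 1))⁻¹ := by
    rw [norm_mul, Complex.norm_natCast]
    gcongr
    exact norm_inv_add_natCast_pow_le hδ hz m (k + 1)
  have h1 : δ < (1 : ℂ).re := hδs.trans_le (min_le_right _ _)
  have hs' : δ < s.re := hδs.trans_le (min_le_left _ _)
  exact ⟨summable_of_summable_hasDerivAt_of_isPreconnected hbound (isOpen_setOf_lt_re δ) hpre
      hderiv hle h1 hc hs',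
    hasDerivAt_tsum_of_isPreconnected hbound (isOpen_setOf_lt_re δ) hpre hderiv hle h1 hc hs'⟩

lemma hasDerivAt_tsum_inv_add_natCast_pow {k : ℕ} (hk : 1 < k) {s : ℂ} (hs : 0 < s.re) :
    HasDerivAt (fun z : ℂ => ∑' m : ℕ, ((z + m) ^ k)⁻¹)
      (-k * ∑' m : ℕ, ((s + m) ^ (k + 1))⁻¹) s := by
  have hc : Summable fun m : ℕ => (0 : ℂ) - ((1 + m : ℂ) ^ k)⁻¹ := by
    simpa using (summable_ofReal.2 (summable_inv_add_natCast_pow one_pos hk)).neg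
  have h := (hasDerivAt_tsum_sub_inv_add_natCast_pow (by lia) hc hs).2.neg
  simpa only [zero_sub, tsum_neg, tsum_mul_left, Pi.neg_def, neg_neg, neg_mul] using h

lemma hasDerivAt_tsum_inv_sub_inv {s : ℂ} (hs : 0 < s.re) :
    (Summable fun m : ℕ => (1 + m : ℂ)⁻¹ - (s + m)⁻¹) ∧
      HasDerivAt (fun z : ℂ => ∑' m : ℕ, ((1 + m : ℂ)⁻¹ - (z + m)⁻¹))
        (∑' m : ℕ, ((s + m) ^ 2)⁻¹) s := by
  simpa using hasDerivAt_tsum_sub_inv_add_natCast_pow (k := 1) (c := fun m => (1 + m : ℂ)⁻¹)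
    one_ne_zero (by simp) hs

lemma digamma_ofReal_eq_tsum {x : ℝ} (hx : 0 < x) :
    digamma x = -Real.eulerMascheroniConstant + ∑' m : ℕ, ((1 + m : ℂ)⁻¹ - (x + m : ℂ)⁻¹) := by
  have hsum : HasSum (fun m : ℕ => (1 + m : ℂ)⁻¹ - (x + m : ℂ)⁻¹) (digamma x - digamma 1) := by
    have hlim := (continuous_ofReal.tendsto _).comp (tendsto_sum_inv_sub_inv hx one_pos)
    rw [ofReal_sub, ← digamma_ofReal hx, ← digamma_ofReal one_pos, ofReal_one] at hlim
    refine (hasDerivAt_tsum_inv_sub_inv (by simpa using hx)).1.hasSum_iff_tendsto_nat.2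
      (hlim.congr fun N => ?_)
    simp
  rw [hsum.tsum_eq, digamma_one]
  ring

lemma analyticOnNhd_digamma : AnalyticOnNhd ℂ digamma {z | 0 < z.re} := by
  have hΓ : AnalyticOnNhd ℂ Gamma {z | 0 < z.re} :=
    DifferentiableOn.analyticOnNhd (fun z hz =>
      (differentiableAt_Gamma z (ne_neg_natCast_of_re_pos hz)).differentiableWithinAt)
      (isOpen_setOf_lt_re 0)
  exact hΓ.deriv.div hΓ fun z hz => Gamma_ne_zero_of_re_pos hz

lemma digamma_eq_tsum {s : ℂ} (hs : 0 < s.re) :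
    digamma s = -Real.eulerMascheroniConstant + ∑' m : ℕ, ((1 + m : ℂ)⁻¹ - (s + m)⁻¹) := by
  have hseries : AnalyticOnNhd ℂ
      (fun s : ℂ => -Real.eulerMascheroniConstant + ∑' m : ℕ, ((1 + m : ℂ)⁻¹ - (s + m)⁻¹))
      {z | 0 < z.re} :=
    DifferentiableOn.analyticOnNhd (fun z hz => ((hasDerivAt_tsum_inv_sub_inv hz).2.const_add
      _).differentiableAt.differentiableWithinAt) (isOpen_setOf_lt_re 0)
  have hpos : Tendsto (fun x : ℝ => (x : ℂ)) (𝓝[>] 1) (𝓝[≠] 1) := by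
    refine tendsto_nhdsWithin_iff.2 ⟨?_, ?_⟩
    · exact (continuous_ofReal.tendsto' 1 1 ofReal_one).mono_left nhdsWithin_le_nhds
    · filter_upwards [self_mem_nhdsWithin] with x hx
      exact ofReal_injective.ne (ne_of_gt hx)
  refine analyticOnNhd_digamma.eqOn_of_preconnected_of_frequently_eq hseries
    (convex_halfSpace_re_gt 0).isPreconnected (z₀ := 1) (by simp) (hpos.frequently ?_) hs
  refine Eventually.frequently ?_
  filter_upwards [self_mem_nhdsWithin] with x hx
  exact digamma_ofReal_eq_tsum (one_pos.trans hx)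

lemma iteratedDeriv_digamma (k : ℕ) {s : ℂ} (hs : 0 < s.re) :
    iteratedDeriv (k + 1) digamma s =
      (-1) ^ k * (k + 1).factorial * ∑' m : ℕ, ((s + m) ^ (k + 2))⁻¹ := by
  induction k generalizing s with
  | zero =>
    have h : digamma =ᶠ[𝓝 s] _ :=
      eventually_of_mem ((isOpen_setOf_lt_re 0).mem_nhds hs) fun z hz => digamma_eq_tsum hz
    rw [iteratedDeriv_one, h.deriv_eq,
      ((hasDerivAt_tsum_inv_sub_inv hs).2.const_add _).deriv]
    simp
  | succ k ih =>
    have h : iteratedDeriv (k + 1) digamma =ᶠ[𝓝 s] _ :=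
      eventually_of_mem ((isOpen_setOf_lt_re 0).mem_nhds hs) fun z hz => ih hz
    rw [iteratedDeriv_succ, h.deriv_eq,
      ((hasDerivAt_tsum_inv_add_natCast_pow (by lia) hs).const_mul _).deriv,
      Nat.factorial_succ (k + 1)]
    push_cast
    ring

/-! ### The archimedean factor -/

lemma iteratedDeriv_comp_mul_left {𝕜 F : Type*} [NontriviallyNormedField 𝕜]
    [NormedAddCommGroup F] [NormedSpace 𝕜 F] (n : ℕ) (c : 𝕜) (f : 𝕜 → F) (x : 𝕜) :
    iteratedDeriv n (fun x => f (c * x)) x = c ^ n • iteratedDeriv n f (c * x) := by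
  induction n generalizing x with
  | zero => simp
  | succ n ih =>
    rw [iteratedDeriv_succ, funext ih, deriv_fun_const_smul_field, deriv_comp_mul_left, smul_smul,
      ← pow_succ, iteratedDeriv_succ]

lemma analyticAt_Gammaℝ {s : ℂ} (hs : 0 < s.re) : AnalyticAt ℂ Gammaℝ s := by
  simpa only [Pi.inv_def, inv_inv] using
    (differentiable_Gammaℝ_inv.analyticAt s).inv (inv_ne_zero (Gammaℝ_ne_zero_of_re_pos hs))

lemma analyticAt_logDeriv_Gammaℝ {s : ℂ} (hs : 0 < s.re) : AnalyticAt ℂ (logDeriv Gammaℝ) s :=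
  (analyticAt_Gammaℝ hs).deriv.div (analyticAt_Gammaℝ hs) (Gammaℝ_ne_zero_of_re_pos hs)

lemma logDeriv_Gammaℝ {s : ℂ} (hs : 0 < s.re) :
    logDeriv Gammaℝ s = -(Complex.log Real.pi / 2) + 2⁻¹ * digamma (2⁻¹ * s) := by
  have hπ : (Real.pi : ℂ) ≠ 0 := mod_cast Real.pi_ne_zero
  have hs2 (m : ℕ) : 2⁻¹ * s ≠ -m := ne_neg_natCast_of_re_pos (by simpa using hs) m
  have hpow : HasDerivAt (fun z : ℂ => (Real.pi : ℂ) ^ (-z / 2))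
      ((Real.pi : ℂ) ^ (-s / 2) * Complex.log Real.pi * (-1 / 2)) s :=
    ((hasDerivAt_id s).neg.div_const 2).const_cpow (Or.inl hπ)
  have hlin : HasDerivAt (fun z : ℂ => 2⁻¹ * z) 2⁻¹ s := by
    simpa using (hasDerivAt_id s).const_mul (2⁻¹ : ℂ)
  have hΓ : DifferentiableAt ℂ (fun z => Gamma (2⁻¹ * z)) s :=
    (differentiableAt_Gamma _ hs2).comp s hlin.differentiableAt
  have hdef : Gammaℝ = fun z : ℂ => (Real.pi : ℂ) ^ (-z / 2) * Gamma (2⁻¹ * z) := by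
    funext z
    rw [Gammaℝ_def, div_eq_inv_mul z]
  have hpow0 : (Real.pi : ℂ) ^ (-s / 2) ≠ 0 := (cpow_ne_zero_iff).2 (Or.inl hπ)
  rw [hdef, logDeriv_mul s hpow0 (Complex.Gamma_ne_zero hs2 :) hpow.differentiableAt hΓ]
  congr 1
  · rw [logDeriv_apply, hpow.deriv]
    field_simp
  · rw [← Function.comp_def, logDeriv_comp (differentiableAt_Gamma _ hs2) hlin.differentiableAt,
      hlin.deriv, digamma_def, mul_comm]

lemma iteratedDeriv_logDeriv_Gammaℝ (k : ℕ) {s : ℂ} (hs : 0 < s.re) :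
    iteratedDeriv (k + 1) (logDeriv Gammaℝ) s =
      (-1) ^ k * (k + 1).factorial * ∑' m : ℕ, ((s + 2 * m) ^ (k + 2))⁻¹ := by
  have h : logDeriv Gammaℝ =ᶠ[𝓝 s] _ :=
    eventually_of_mem ((isOpen_setOf_lt_re 0).mem_nhds hs) fun z hz => logDeriv_Gammaℝ hz
  rw [h.iteratedDeriv_eq, iteratedDeriv_const_add (n := k + 1) k.succ_pos,
    iteratedDeriv_const_mul_field, iteratedDeriv_comp_mul_left,
    iteratedDeriv_digamma k (by simpa using hs), smul_eq_mul, mul_left_comm (2⁻¹ ^ _),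
    mul_left_comm 2⁻¹, ← mul_assoc 2⁻¹, ← pow_succ', ← tsum_mul_left]
  congr 2 with m
  rw [inv_pow, ← mul_inv, ← mul_pow, mul_add, mul_inv_cancel_left₀ two_ne_zero]

lemma logDeriv_Gammaℝ_one :
    logDeriv Gammaℝ 1 =
      ((-(Real.eulerMascheroniConstant + Real.log (4 * Real.pi)) / 2 : ℝ) : ℂ) := by
  rw [logDeriv_apply, hasDerivAt_Gammaℝ_one.deriv, Gammaℝ_one, div_one]
  push_cast [ofReal_log (by positivity : 0 ≤ 4 * Real.pi)]
  rfl

lemma tsum_inv_one_add_two_mul_pow {j : ℕ} (hj : 1 < j) :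
    ∑' m : ℕ, ((1 + 2 * m : ℝ) ^ j)⁻¹ =
      (1 - (2 : ℝ) ^ (-(j : ℤ))) * ∑' m : ℕ, 1 / ((m : ℝ) + 1) ^ j := by
  let f (m : ℕ) : ℝ := 1 / ((m : ℝ) + 1) ^ j
  have hf : Summable f := by
    simpa [f] using (summable_nat_add_iff 1).2 (Real.summable_one_div_nat_pow.2 hj)
  have heven (m : ℕ) : f (2 * m) = ((1 + 2 * m : ℝ) ^ j)⁻¹ := by
    simp only [f, Nat.cast_mul, Nat.cast_ofNat, one_div, add_comm]
  have hodd (m : ℕ) : f (2 * m + 1) = (2 : ℝ) ^ (-(j : ℤ)) * f m := by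
    simp only [f, Nat.cast_add, Nat.cast_mul, Nat.cast_ofNat, Nat.cast_one, zpow_neg, zpow_natCast]
    rw [show 2 * (m : ℝ) + 1 + 1 = 2 * (m + 1) by ring, mul_pow, one_div, mul_inv, one_div]
  have hsplit : ∑' m, f (2 * m) + ∑' m, f (2 * m + 1) = ∑' m, f m :=
    tsum_even_add_odd (hf.comp_injective (mul_right_injective₀ two_ne_zero))
      (hf.comp_injective ((add_left_injective 1).comp (mul_right_injective₀ two_ne_zero)))
  simp only [heven, hodd, tsum_mul_left] at hsplit
  linear_combination hsplit

lemma iteratedDeriv_logDeriv_Gammaℝ_one {k : ℕ} (hk : k ≠ 0) :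
    iteratedDeriv k (logDeriv Gammaℝ) 1 =
      (((-1) ^ (k + 1) * k.factorial * ((1 - (2 : ℝ) ^ (-((k + 1 : ℕ) : ℤ))) *
        ∑' m : ℕ, 1 / ((m : ℝ) + 1) ^ (k + 1)) : ℝ) : ℂ) := by
  obtain ⟨k, rfl⟩ := Nat.exists_eq_add_one_of_ne_zero hk
  rw [iteratedDeriv_logDeriv_Gammaℝ k (by simp), ← tsum_inv_one_add_two_mul_pow (by lia)]
  push_cast
  ring

/-! ### Li coefficients as a linear functional -/

lemma iteratedDeriv_succ_pow_mul {𝕜 : Type*} [NontriviallyNormedField 𝕜] [CharZero 𝕜]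
    {f : 𝕜 → 𝕜} {x : 𝕜} {n : ℕ} (hf : ContDiffAt 𝕜 (n + 1) f x) :
    iteratedDeriv (n + 1) (fun s => s ^ n * f s) x =
      ∑ j ∈ range (n + 1), ((n + 1).choose (j + 1) : 𝕜) *
        (n.factorial / j.factorial * x ^ j) * iteratedDeriv (j + 1) f x := by
  have hpow : ContDiffAt 𝕜 (n + 1 : ℕ) (fun s : 𝕜 => s ^ n) x := by fun_prop
  rw [iteratedDeriv_fun_mul hpow (mod_cast hf), sum_range_succ]
  simp only [iteratedDeriv_pow, Nat.descFactorial_succ, Nat.sub_self, zero_mul, mul_zero,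
    Nat.cast_zero, add_zero]
  rw [← sum_range_reflect]
  refine sum_congr rfl fun j hj => ?_
  have hjn : j ≤ n := mem_range_succ_iff.1 hj
  have hfact : (n.descFactorial (n - j) : 𝕜) = n.factorial / j.factorial := by
    rw [eq_div_iff (mod_cast j.factorial_ne_zero), mul_comm]
    have h := Nat.factorial_mul_descFactorial (Nat.sub_le n j)
    rw [Nat.sub_sub_self hjn] at h
    exact_mod_cast h
  rw [Nat.add_sub_cancel, hfact, Nat.sub_sub_self hjn, Nat.succ_sub (Nat.sub_le n j),
    Nat.sub_sub_self hjn, ← Nat.choose_symm (by lia : j + 1 ≤ n + 1), Nat.add_sub_add_right]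

lemma differentiable_riemannXi : Differentiable ℂ riemannXi := by
  have := differentiable_completedZeta₀
  unfold riemannXi
  fun_prop

lemma riemannXi_one : riemannXi 1 = 1 := by simp [riemannXi]

lemma deriv_log_riemannXi_eventuallyEq :
    deriv (fun s => log (riemannXi s)) =ᶠ[𝓝 1] logDeriv riemannXi := by
  have hslit : ∀ᶠ s in 𝓝 (1 : ℂ), riemannXi s ∈ slitPlane :=
    differentiable_riemannXi.continuous.continuousAt.eventually_mem
      (isOpen_slitPlane.mem_nhds (by simp [riemannXi_one]))
  filter_upwards [hslit] with s hs
  rw [((differentiable_riemannXi s).hasDerivAt.clog hs).deriv, logDeriv_apply]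

/-- The linear functional taking `ξ'/ξ` to the Li coefficient `λ_n`, and hence the logarithmic
derivative of a factor of `ξ` to the contribution of that factor to `λ_n`. -/
noncomputable def liFunctional (n : ℕ) (g : ℂ → ℂ) : ℂ :=
  ∑ j ∈ Icc 1 n, (n.choose j : ℂ) / (j - 1).factorial * iteratedDeriv (j - 1) g 1

lemma liFunctional_congr {f g : ℂ → ℂ} (h : f =ᶠ[𝓝 1] g) (n : ℕ) :
    liFunctional n f = liFunctional n g := by
  simp only [liFunctional, h.iteratedDeriv_eq]

lemma liFunctional_add {f g : ℂ → ℂ} (hf : AnalyticAt ℂ f 1) (hg : AnalyticAt ℂ g 1) (n : ℕ) :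
    liFunctional n (f + g) = liFunctional n f + liFunctional n g := by
  simp only [liFunctional, iteratedDeriv_add hf.contDiffAt hg.contDiffAt, mul_add,
    sum_add_distrib]

lemma liCoeff_eq_liFunctional {n : ℕ} (hn : n ≠ 0) :
    liCoeff n = liFunctional n (logDeriv riemannXi) := by
  obtain ⟨n, rfl⟩ := Nat.exists_eq_add_one_of_ne_zero hn
  have hlog : AnalyticAt ℂ (fun s => log (riemannXi s)) 1 :=
    (differentiable_riemannXi.analyticAt 1).clog (by simp [riemannXi_one])
  have hn0 : (n.factorial : ℂ) ≠ 0 := mod_cast n.factorial_ne_zero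
  rw [liCoeff, Nat.add_sub_cancel, iteratedDeriv_succ_pow_mul hlog.contDiffAt, mul_sum,
    ← liFunctional_congr deriv_log_riemannXi_eventuallyEq, liFunctional,
    ← Ico_add_one_right_eq_Icc, ← zero_add 1, ← sum_Ico_add', ← range_eq_Ico, zero_add]
  refine sum_congr rfl fun j _ => ?_
  rw [Nat.add_sub_cancel, iteratedDeriv_succ', one_pow]
  field_simp

lemma iteratedDeriv_inv_eq {𝕜 : Type*} [NontriviallyNormedField 𝕜] (k : ℕ) (s : 𝕜) :
    iteratedDeriv k (fun z : 𝕜 => z⁻¹) s = (-1) ^ k * (k.factorial / s ^ (k + 1)) := by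
  rw [iteratedDeriv_eq_iterate, iter_deriv_inv k s,
    show -1 - (k : ℤ) = -((k + 1 : ℕ) : ℤ) by push_cast; ring, zpow_neg, zpow_natCast]
  ring

lemma liFunctional_inv {n : ℕ} (hn : n ≠ 0) : liFunctional n (fun s => s⁻¹) = 1 := by
  have halt := Int.alternating_sum_range_choose_of_ne hn
  rw [range_eq_Ico, sum_eq_sum_Ico_succ_bot n.succ_pos, zero_add,
    Nat.succ_eq_add_one, Ico_add_one_right_eq_Icc, pow_zero, Nat.choose_zero_right, Nat.cast_one,
    one_mul, add_comm, add_eq_zero_iff_eq_neg] at halt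
  have hterm : ∀ j ∈ Icc 1 n, (n.choose j : ℂ) / (j - 1).factorial *
      iteratedDeriv (j - 1) (fun s : ℂ => s⁻¹) 1 = -((-1) ^ j * n.choose j : ℤ) := by
    intro j hj
    obtain ⟨k, rfl⟩ := Nat.exists_eq_add_of_le' (mem_Icc.1 hj).1
    have hk : (k.factorial : ℂ) ≠ 0 := mod_cast k.factorial_ne_zero
    rw [Nat.add_sub_cancel, iteratedDeriv_inv_eq]
    push_cast
    field_simp
    ring
  rw [liFunctional, sum_congr rfl hterm, sum_neg_distrib, ← Int.cast_sum, halt]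
  simp

lemma riemannXi_eq_mul {s : ℂ} (hs : 0 < s.re) :
    riemannXi s = s * (Gammaℝ s * riemannZeta₁ s) := by
  rcases eq_or_ne s 1 with rfl | hs1
  · simp [riemannXi_one, Gammaℝ_one, riemannZeta₁_one]
  have hs0 : s ≠ 0 := fun h => by simp [h] at hs
  have hs1' : s - 1 ≠ 0 := sub_ne_zero.2 hs1
  have hs1'' : 1 - s ≠ 0 := sub_ne_zero.2 hs1.symm
  have hζ : Gammaℝ s * riemannZeta₁ s = (s - 1) * completedRiemannZeta s := by
    rw [← mul_inv_cancel_left₀ hs1' (riemannZeta₁ s), ← riemannZeta_eq_inv_sub_mul hs1,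
      riemannZeta_def_of_ne_zero hs0]
    field_simp [Gammaℝ_ne_zero_of_re_pos hs]
  rw [hζ, completedRiemannZeta_eq, riemannXi]
  field_simp
  ring

lemma analyticAt_logDeriv_riemannZeta₁_one : AnalyticAt ℂ (logDeriv riemannZeta₁) 1 :=
  (differentiable_riemannZeta₁.analyticAt 1).deriv.div (differentiable_riemannZeta₁.analyticAt 1)
    (by simp [riemannZeta₁_one])

lemma logDeriv_riemannXi_eventuallyEq :
    logDeriv riemannXi =ᶠ[𝓝 1] (fun s => s⁻¹) + (logDeriv Gammaℝ + logDeriv riemannZeta₁) := by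
  have hre : ∀ᶠ s : ℂ in 𝓝 1, 0 < s.re := (isOpen_setOf_lt_re 0).mem_nhds (by simp)
  refine (logDeriv_congr_nhds (hre.mono fun s => riemannXi_eq_mul)).trans ?_
  filter_upwards [hre, riemannZeta₁_ne_zero_of_near_one] with s hs hζ
  have hs0 : s ≠ 0 := fun h => by simp [h] at hs
  have hΓ := Gammaℝ_ne_zero_of_re_pos hs
  have hΓd := (analyticAt_Gammaℝ hs).differentiableAt
  have hζd := differentiable_riemannZeta₁ s
  rw [logDeriv_mul (g := fun s => Gammaℝ s * riemannZeta₁ s) s hs0 (mul_ne_zero hΓ hζ)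
      differentiableAt_fun_id (hΓd.mul hζd), logDeriv_mul s hΓ hζ hΓd hζd, logDeriv_id', one_div,
    Pi.add_apply, Pi.add_apply]

lemma liCoeff_eq_add {n : ℕ} (hn : n ≠ 0) :
    liCoeff n =
      1 + liFunctional n (logDeriv Gammaℝ) + liFunctional n (logDeriv riemannZeta₁) := by
  have hΓ : AnalyticAt ℂ (logDeriv Gammaℝ) 1 := analyticAt_logDeriv_Gammaℝ (by simp)
  have hζ := analyticAt_logDeriv_riemannZeta₁_one
  rw [liCoeff_eq_liFunctional hn, liFunctional_congr logDeriv_riemannXi_eventuallyEq,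
    liFunctional_add (analyticAt_inv one_ne_zero) (hΓ.add hζ), liFunctional_add hΓ hζ,
    liFunctional_inv hn, add_assoc]

lemma liFunctional_logDeriv_Gammaℝ {n : ℕ} (hn : n ≠ 0) :
    liFunctional n (logDeriv Gammaℝ) =
      ((-((n : ℝ) / 2 * (Real.eulerMascheroniConstant + Real.log (4 * Real.pi))) +
        ∑ j ∈ Icc 2 n, (-1 : ℝ) ^ j * (n.choose j : ℝ) * (1 - (2 : ℝ) ^ (-(j : ℤ))) *
          ∑' m : ℕ, 1 / ((m : ℝ) + 1) ^ j : ℝ) : ℂ) := by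
  rw [liFunctional, ← insert_Icc_add_one_left_eq_Icc (Nat.one_le_iff_ne_zero.2 hn),
    sum_insert (by simp), ofReal_add, ofReal_sum]
  congr 1
  · rw [Nat.sub_self, iteratedDeriv_zero, logDeriv_Gammaℝ_one, Nat.choose_one_right]
    push_cast
    ring
  · refine sum_congr rfl fun j hj => ?_
    have hj2 : 2 ≤ j := (mem_Icc.1 hj).1
    obtain ⟨k, rfl⟩ := Nat.exists_eq_add_of_le' (one_le_two.trans hj2)
    have hfact : (k.factorial : ℂ) ≠ 0 := mod_cast k.factorial_ne_zero
    rw [Nat.add_sub_cancel, iteratedDeriv_logDeriv_Gammaℝ_one (by lia)]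
    push_cast
    field_simp

/-! ### An Abelian theorem for Dirichlet series -/

section Abelian

open MeasureTheory

lemma integral_exp_comp_smul {E : Type*} [NormedAddCommGroup E] [NormedSpace ℝ E] (f : ℝ → E) :
    ∫ t in Set.Ioi (0 : ℝ), Real.exp t • f (Real.exp t) = ∫ x in Set.Ioi (1 : ℝ), f x := by
  rw [← Real.exp_zero, ← Real.image_exp_Ioi, integral_image_eq_integral_abs_deriv_smul
    measurableSet_Ioi (fun t _ => (Real.hasDerivAt_exp t).hasDerivWithinAt)
    Real.exp_injective.injOn]
  simp only [Real.abs_exp]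

lemma integral_Ioi_one_mul_rpow (f : ℝ → ℝ) (σ : ℝ) :
    ∫ x in Set.Ioi (1 : ℝ), f x * x ^ (-(σ + 1)) =
      ∫ t in Set.Ioi (0 : ℝ), f (Real.exp t) * Real.exp (-(σ * t)) := by
  rw [← integral_exp_comp_smul]
  congr 1 with t
  rw [smul_eq_mul, ← Real.exp_mul, mul_left_comm, ← Real.exp_add]
  ring_nf

lemma integrableOn_exp_neg_mul {σ : ℝ} (hσ : 0 < σ) :
    IntegrableOn (fun t : ℝ => Real.exp (-(σ * t))) (Set.Ioi 0) := by
  simpa only [neg_mul] using exp_neg_integrableOn_Ioi 0 hσ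

lemma integrableOn_mul_exp_neg_mul {f : ℝ → ℝ} {C σ : ℝ} (hf : Measurable f)
    (hC : ∀ t, 0 < t → |f t| ≤ C) (hσ : 0 < σ) :
    IntegrableOn (fun t => f t * Real.exp (-(σ * t))) (Set.Ioi 0) :=
  (integrableOn_exp_neg_mul hσ).bdd_mul hf.aestronglyMeasurable
    ((ae_restrict_iff' measurableSet_Ioi).2 (Eventually.of_forall hC))

lemma mul_integral_mul_exp_neg_mul (f : ℝ → ℝ) {σ : ℝ} (hσ : 0 < σ) :
    σ * ∫ t in Set.Ioi (0 : ℝ), f t * Real.exp (-(σ * t)) =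
      ∫ t in Set.Ioi (0 : ℝ), f (σ⁻¹ * t) * Real.exp (-t) := by
  have h := integral_comp_mul_left_Ioi (fun t => f t * Real.exp (-(σ * t))) 0 (inv_pos.2 hσ)
  simpa [mul_inv_cancel_left₀ hσ.ne'] using h.symm

lemma tendsto_mul_integral_mul_exp_neg_mul {f : ℝ → ℝ} {C L : ℝ} (hf : Measurable f)
    (hC : ∀ t, 0 < t → |f t| ≤ C) (hL : Tendsto f atTop (𝓝 L)) :
    Tendsto (fun σ : ℝ => σ * ∫ t in Set.Ioi (0 : ℝ), f t * Real.exp (-(σ * t)))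
      (𝓝[>] 0) (𝓝 L) := by
  have hlim : Tendsto (fun σ : ℝ => ∫ t in Set.Ioi (0 : ℝ), f (σ⁻¹ * t) * Real.exp (-t))
      (𝓝[>] 0) (𝓝 (∫ t in Set.Ioi (0 : ℝ), L * Real.exp (-t))) := by
    refine tendsto_integral_filter_of_dominated_convergence (fun t => C * Real.exp (-t)) ?_ ?_ ?_ ?_
    · exact Eventually.of_forall fun σ => by fun_prop
    · filter_upwards [self_mem_nhdsWithin] with σ (hσ : 0 < σ)
      refine (ae_restrict_iff' measurableSet_Ioi).2 (Eventually.of_forall fun t (ht : 0 < t) => ?_)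
      rw [norm_mul, Real.norm_eq_abs, Real.norm_eq_abs, Real.abs_exp]
      gcongr
      exact hC _ (by positivity)
    · simpa using (integrableOn_exp_neg_mul one_pos).const_mul C
    · refine (ae_restrict_iff' measurableSet_Ioi).2 (Eventually.of_forall fun t (ht : 0 < t) => ?_)
      exact (hL.comp (tendsto_inv_nhdsGT_zero.atTop_mul_const ht)).mul_const _
  rw [integral_const_mul, integral_exp_neg_Ioi_zero, mul_one] at hlim
  refine hlim.congr' ?_
  filter_upwards [self_mem_nhdsWithin] with σ hσ
  exact (mul_integral_mul_exp_neg_mul f hσ).symm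

lemma integral_pow_mul_exp_neg_mul (m : ℕ) {σ : ℝ} (hσ : 0 < σ) :
    ∫ t in Set.Ioi (0 : ℝ), t ^ m * Real.exp (-(σ * t)) = m.factorial / σ ^ (m + 1) := by
  have h := Real.integral_rpow_mul_exp_neg_mul_Ioi (a := m + 1) (by positivity) hσ
  simp only [add_sub_cancel_right, Real.rpow_natCast, Real.Gamma_nat_eq_factorial] at h
  rw [h, ← Nat.cast_add_one, Real.rpow_natCast, one_div, inv_pow, inv_mul_eq_div]

lemma integrableOn_pow_mul_exp_neg_mul (m : ℕ) {σ : ℝ} (hσ : 0 < σ) :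
    IntegrableOn (fun t : ℝ => t ^ m * Real.exp (-(σ * t))) (Set.Ioi 0) :=
  not_imp_comm.1 integral_undef (by rw [integral_pow_mul_exp_neg_mul m hσ]; positivity)

lemma log_sub_log_floor_le {x : ℝ} (hx : 1 ≤ x) : Real.log x - Real.log ⌊x⌋₊ ≤ 2 / x := by
  have hfloor : 1 ≤ (⌊x⌋₊ : ℝ) := mod_cast Nat.floor_pos.2 hx
  have hlt : x < ⌊x⌋₊ + 1 := Nat.lt_floor_add_one x
  calc Real.log x - Real.log ⌊x⌋₊ = Real.log (x / ⌊x⌋₊) :=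
        (Real.log_div (by positivity) (by positivity)).symm
    _ ≤ x / ⌊x⌋₊ - 1 := Real.log_le_sub_one_of_pos (by positivity)
    _ ≤ 1 / ⌊x⌋₊ := by
        rw [div_sub_one (by positivity)]
        gcongr
        linarith
    _ ≤ 2 / x := by
        rw [div_le_div_iff₀ (by positivity) (by positivity)]
        linarith

lemma tendsto_log_floor_pow_sub_log_pow (m : ℕ) :
    Tendsto (fun x : ℝ => Real.log ⌊x⌋₊ ^ m - Real.log x ^ m) atTop (𝓝 0) := by
  have hbound : Tendsto (fun x : ℝ => 2 * m * (Real.log x ^ (m - 1) / x)) atTop (𝓝 0) := by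
    simpa using (Real.isLittleO_pow_log_id_atTop.tendsto_div_nhds_zero).const_mul (2 * m : ℝ)
  refine squeeze_zero_norm' ?_ hbound
  filter_upwards [eventually_ge_atTop 1] with x hx
  have hfloor : 0 ≤ Real.log ⌊x⌋₊ := Real.log_natCast_nonneg _
  have hle : Real.log ⌊x⌋₊ ≤ Real.log x :=
    Real.log_le_log (mod_cast Nat.floor_pos.2 hx) (Nat.floor_le (by positivity))
  calc |Real.log ⌊x⌋₊ ^ m - Real.log x ^ m|
      ≤ |Real.log ⌊x⌋₊ - Real.log x| * m * max |Real.log ⌊x⌋₊| |Real.log x| ^ (m - 1) :=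
        abs_pow_sub_pow_le _ _ m
    _ = (Real.log x - Real.log ⌊x⌋₊) * m * Real.log x ^ (m - 1) := by
        rw [abs_of_nonneg hfloor, abs_of_nonneg (hfloor.trans hle), max_eq_right hle, abs_sub_comm,
          abs_of_nonneg (sub_nonneg.2 hle)]
    _ ≤ 2 / x * m * Real.log x ^ (m - 1) := by
        gcongr
        · exact pow_nonneg (hfloor.trans hle) _
        · exact log_sub_log_floor_le hx
    _ = 2 * m * (Real.log x ^ (m - 1) / x) := by ring

/-- The deviation at `x` of the summatory function of `a` from the main term
`(log x) ^ (l + 1) / (l + 1)`. -/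
noncomputable def logPowDeviation (a : ℕ → ℝ) (l : ℕ) (x : ℝ) : ℝ :=
  ∑ k ∈ Icc 1 ⌊x⌋₊, a k - Real.log x ^ (l + 1) / (l + 1)

variable {a : ℕ → ℝ} {l : ℕ} {L σ : ℝ}

lemma measurable_logPowDeviation : Measurable (logPowDeviation a l) :=
  (measurable_from_nat (f := fun n => ∑ k ∈ Icc 1 n, a k) |>.comp Nat.measurable_floor).sub
    ((Real.measurable_log.pow_const _).div_const _)

lemma tendsto_logPowDeviation
    (h : Tendsto (fun N : ℕ => ∑ k ∈ Icc 1 N, a k - Real.log N ^ (l + 1) / (l + 1))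
      atTop (𝓝 L)) : Tendsto (logPowDeviation a l) atTop (𝓝 L) := by
  have hfloor := (h.comp (tendsto_nat_floor_atTop (α := ℝ))).add
    ((tendsto_log_floor_pow_sub_log_pow (l + 1)).div_const ((l : ℝ) + 1))
  rw [zero_div, add_zero] at hfloor
  refine hfloor.congr fun x => ?_
  rw [logPowDeviation, Function.comp_apply]
  ring

lemma abs_logPowDeviation_le {x X : ℝ} (hx : 1 ≤ x) (hX : x ≤ X) :
    |logPowDeviation a l x| ≤ ∑ k ∈ Icc 1 ⌊X⌋₊, |a k| + Real.log X ^ (l + 1) / (l + 1) := by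
  have hlog : 0 ≤ Real.log x := Real.log_nonneg hx
  refine (abs_sub _ _).trans (add_le_add ((abs_sum_le_sum_abs _ _).trans ?_) ?_)
  · exact sum_le_sum_of_subset_of_nonneg (Icc_subset_Icc_right (Nat.floor_le_floor hX))
      fun _ _ _ => abs_nonneg _
  · rw [abs_of_nonneg (by positivity)]
    gcongr

lemma exists_abs_logPowDeviation_le (h : Tendsto (logPowDeviation a l) atTop (𝓝 L)) :
    ∃ C, ∀ x : ℝ, 1 ≤ x → |logPowDeviation a l x| ≤ C := by
  obtain ⟨X, hX⟩ := eventually_atTop.1 (h.abs.eventually_lt_const (lt_add_one |L|))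
  refine ⟨max (|L| + 1) (∑ k ∈ Icc 1 ⌊X⌋₊, |a k| + Real.log X ^ (l + 1) / (l + 1)),
    fun x hx => ?_⟩
  rcases le_total X x with hXx | hxX
  · exact (hX x hXx).le.trans (le_max_left _ _)
  · exact (abs_logPowDeviation_le hx hxX).trans (le_max_right _ _)

lemma isBigO_sum_rpow
    (h : Tendsto (fun N : ℕ => ∑ k ∈ Icc 1 N, a k - Real.log N ^ (l + 1) / (l + 1))
      atTop (𝓝 L)) {r : ℝ} (hr : 0 < r) :
    (fun n : ℕ => ∑ k ∈ Icc 1 n, a k) =O[atTop] fun n : ℕ => (n : ℝ) ^ r := by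
  have hlog : (fun n : ℕ => Real.log n ^ (l + 1)) =O[atTop] fun n : ℕ => (n : ℝ) ^ r := by
    have hreal := isLittleO_log_rpow_rpow_atTop ((l + 1 : ℕ) : ℝ) hr
    simp only [Real.rpow_natCast] at hreal
    exact (hreal.comp_tendsto tendsto_natCast_atTop_atTop).isBigO
  have hone : (fun _ : ℕ => (1 : ℝ)) =O[atTop] fun n : ℕ => (n : ℝ) ^ r :=
    (Asymptotics.isLittleO_const_left.2 (Or.inr (tendsto_norm_atTop_atTop.comp
      ((tendsto_rpow_atTop hr).comp tendsto_natCast_atTop_atTop)))).isBigO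
  refine (((h.isBigO_one ℝ).trans hone).add
    (hlog.const_mul_left (1 / ((l : ℝ) + 1)))).congr_left fun n => ?_
  ring

lemma LSeries_ofReal_eq_integral (ha : ∀ n, 0 ≤ a n)
    (hO : ∀ r : ℝ, 0 < r → (fun n : ℕ => ∑ k ∈ Icc 1 n, a k) =O[atTop] fun n : ℕ => (n : ℝ) ^ r)
    (hσ : 0 < σ) :
    LSeries (fun n => (a n : ℂ)) σ =
      (σ * ∫ t in Set.Ioi (0 : ℝ), (∑ k ∈ Icc 1 ⌊Real.exp t⌋₊, a k) * Real.exp (-(σ * t)) : ℝ) := by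
  rw [LSeries_eq_mul_integral_of_nonneg a (half_pos hσ).le (s := (σ : ℂ))
    (by simpa using half_lt_self hσ) (hO _ (half_pos hσ)) ha,
    ← integral_Ioi_one_mul_rpow fun x => ∑ k ∈ Icc 1 ⌊x⌋₊, a k, ofReal_mul,
    ← integral_complex_ofReal]
  congr 1
  refine setIntegral_congr_fun measurableSet_Ioi fun x (hx : 1 < x) => ?_
  push_cast [ofReal_cpow (one_pos.trans hx).le]
  rfl

lemma LSeries_ofReal_sub_eq_integral_logPowDeviation (ha : ∀ n, 0 ≤ a n)
    (h : Tendsto (fun N : ℕ => ∑ k ∈ Icc 1 N, a k - Real.log N ^ (l + 1) / (l + 1))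
      atTop (𝓝 L)) (hσ : 0 < σ) :
    LSeries (fun n => (a n : ℂ)) σ - l.factorial / (σ : ℂ) ^ (l + 1) =
      (σ * ∫ t in Set.Ioi (0 : ℝ), logPowDeviation a l (Real.exp t) * Real.exp (-(σ * t)) : ℝ) := by
  obtain ⟨C, hC⟩ := exists_abs_logPowDeviation_le (tendsto_logPowDeviation h)
  have hdev := integrableOn_mul_exp_neg_mul
    (measurable_logPowDeviation.comp Real.measurable_exp)
    (fun t ht => hC _ (Real.one_le_exp ht.le)) hσ
  have hmain := (integrableOn_pow_mul_exp_neg_mul (l + 1) hσ).const_mul (1 / ((l : ℝ) + 1))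
  have hsplit (t : ℝ) : (∑ k ∈ Icc 1 ⌊Real.exp t⌋₊, a k) * Real.exp (-(σ * t)) =
      (logPowDeviation a l ∘ Real.exp) t * Real.exp (-(σ * t)) +
        1 / ((l : ℝ) + 1) * (t ^ (l + 1) * Real.exp (-(σ * t))) := by
    rw [Function.comp_apply, logPowDeviation, Real.log_exp]
    ring
  rw [LSeries_ofReal_eq_integral ha (fun _ => isBigO_sum_rpow h) hσ]
  simp only [hsplit]
  rw [integral_add hdev hmain, integral_const_mul, integral_pow_mul_exp_neg_mul _ hσ,
    Nat.factorial_succ]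
  have hσ0 : (σ : ℂ) ≠ 0 := mod_cast hσ.ne'
  have hl : (l + 1 : ℂ) ≠ 0 := l.cast_add_one_ne_zero
  push_cast
  simp only [Function.comp_apply]
  field_simp
  ring

lemma tendsto_LSeries_sub_of_tendsto_sum_sub_log_pow (ha : ∀ n, 0 ≤ a n)
    (h : Tendsto (fun N : ℕ => ∑ k ∈ Icc 1 N, a k - Real.log N ^ (l + 1) / (l + 1))
      atTop (𝓝 L)) :
    Tendsto (fun σ : ℝ => LSeries (fun n => (a n : ℂ)) σ - l.factorial / (σ : ℂ) ^ (l + 1))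
      (𝓝[>] 0) (𝓝 L) := by
  have hlim := tendsto_logPowDeviation h
  obtain ⟨C, hC⟩ := exists_abs_logPowDeviation_le hlim
  have hlaplace := tendsto_mul_integral_mul_exp_neg_mul
    (measurable_logPowDeviation.comp Real.measurable_exp)
    (fun t ht => hC _ (Real.one_le_exp ht.le)) (hlim.comp Real.tendsto_exp_atTop)
  refine ((continuous_ofReal.tendsto _).comp hlaplace).congr' ?_
  filter_upwards [self_mem_nhdsWithin] with σ hσ
  exact (LSeries_ofReal_sub_eq_integral_logPowDeviation ha h hσ).symm

end Abelian

/-! ### The zeta factor -/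

section VonMangoldt

open scoped ArithmeticFunction.vonMangoldt

lemma logDeriv_riemannZeta₁ {s : ℂ} (hs : 1 < s.re) :
    logDeriv riemannZeta₁ s = (s - 1)⁻¹ - LSeries (fun n => (Λ n : ℂ)) s := by
  have hs1 : s ≠ 1 := fun h => by simp [h] at hs
  have heq : riemannZeta₁ =ᶠ[𝓝 s] fun z => (z - 1) * riemannZeta z := by
    filter_upwards [eventually_ne_nhds hs1] with z hz
    rw [riemannZeta_eq_inv_sub_mul hz, mul_inv_cancel_left₀ (sub_ne_zero.2 hz)]
  rw [logDeriv_congr_nhds heq |>.eq_of_nhds,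
    logDeriv_mul (f := fun z => z - 1) s (sub_ne_zero.2 hs1)
      (riemannZeta_ne_zero_of_one_le_re hs.le) (by fun_prop) (differentiableAt_riemannZeta hs1),
    ArithmeticFunction.LSeries_vonMangoldt_eq_deriv_riemannZeta_div hs]
  simp [logDeriv_apply, neg_div]

lemma logMul_iterate_apply (f : ℕ → ℂ) (l n : ℕ) :
    LSeries.logMul^[l] f n = Complex.log n ^ l * f n := by
  induction l with
  | zero => simp
  | succ l ih =>
    rw [Function.iterate_succ_apply', LSeries.logMul, ih]
    ring

lemma LSeries_div_natCast (f : ℕ → ℂ) (s : ℂ) :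
    LSeries (fun n => f n / n) s = LSeries f (1 + s) := by
  refine tsum_congr fun n => ?_
  rcases eq_or_ne n 0 with rfl | hn
  · simp
  · have hn' : (n : ℂ) ≠ 0 := mod_cast hn
    rw [LSeries.term_of_ne_zero hn, LSeries.term_of_ne_zero hn, cpow_add _ _ hn', cpow_one,
      div_div]

lemma LSeries_vonMangoldt_mul_log_pow_div (l : ℕ) (s : ℂ) :
    LSeries (fun n => ((Λ n * Real.log n ^ l / n : ℝ) : ℂ)) s =
      LSeries (LSeries.logMul^[l] fun n => (Λ n : ℂ)) (1 + s) := by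
  rw [← LSeries_div_natCast]
  congr 1 with n
  rw [logMul_iterate_apply]
  push_cast
  rw [mul_comm]

lemma abscissaOfAbsConv_vonMangoldt_le :
    LSeries.abscissaOfAbsConv (fun n => (Λ n : ℂ)) ≤ 1 := by
  exact_mod_cast LSeries.abscissaOfAbsConv_le_of_forall_lt_LSeriesSummable (x := 1)
    fun y hy => ArithmeticFunction.LSeriesSummable_vonMangoldt (by simpa using hy)

lemma iteratedDeriv_logDeriv_riemannZeta₁ (l : ℕ) {s : ℂ} (hs : 0 < s.re) :
    iteratedDeriv l (logDeriv riemannZeta₁) (1 + s) =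
      (-1) ^ (l + 1) * (LSeries (fun n => ((Λ n * Real.log n ^ l / n : ℝ) : ℂ)) s -
        l.factorial / s ^ (l + 1)) := by
  have hs1 : 1 < (1 + s).re := by simpa using hs
  have heq : logDeriv riemannZeta₁ =ᶠ[𝓝 (1 + s)]
      fun z => (z - 1)⁻¹ - LSeries (fun n => (Λ n : ℂ)) z :=
    eventually_of_mem ((isOpen_setOf_lt_re 1).mem_nhds hs1) fun z hz => logDeriv_riemannZeta₁ hz
  have habs : LSeries.abscissaOfAbsConv (fun n => (Λ n : ℂ)) < (1 + s).re :=
    abscissaOfAbsConv_vonMangoldt_le.trans_lt (mod_cast hs1)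
  have hinv : AnalyticAt ℂ (fun z : ℂ => (z - 1)⁻¹) (1 + s) :=
    AnalyticAt.inv (by fun_prop) fun h => by simp_all
  rw [heq.iteratedDeriv_eq, iteratedDeriv_fun_sub hinv.contDiffAt
      (LSeries_analyticOnNhd _ _ habs).contDiffAt, LSeries_iteratedDeriv l habs,
    congrFun (iteratedDeriv_comp_sub_const l (fun z : ℂ => z⁻¹) 1), add_sub_cancel_left,
    iteratedDeriv_inv_eq, LSeries_vonMangoldt_mul_log_pow_div]
  ring

lemma iteratedDeriv_logDeriv_riemannZeta₁_one {l : ℕ} {L : ℝ}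
    (hL : Tendsto (fun N : ℕ => ∑ k ∈ Icc 2 N, Λ k * Real.log k ^ l / k -
      Real.log N ^ (l + 1) / (l + 1)) atTop (𝓝 L)) :
    iteratedDeriv l (logDeriv riemannZeta₁) 1 = (-1) ^ (l + 1) * L := by
  have hnonneg (n : ℕ) : 0 ≤ Λ n * Real.log n ^ l / n :=
    div_nonneg (mul_nonneg ArithmeticFunction.vonMangoldt_nonneg
      (pow_nonneg (Real.log_natCast_nonneg n) l)) n.cast_nonneg
  have hL' : Tendsto (fun N : ℕ => ∑ k ∈ Icc 1 N, Λ k * Real.log k ^ l / k -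
      Real.log N ^ (l + 1) / (l + 1)) atTop (𝓝 L) := by
    refine hL.congr' ?_
    filter_upwards [eventually_ge_atTop 1] with N hN
    rw [← insert_Icc_add_one_left_eq_Icc hN, sum_insert (by simp)]
    simp
  have hcont : ContinuousAt (iteratedDeriv l (logDeriv riemannZeta₁)) 1 := by
    rw [iteratedDeriv_eq_iterate]
    exact (analyticAt_logDeriv_riemannZeta₁_one.iterated_deriv l).continuousAt
  have hadd : Tendsto (fun σ : ℝ => (1 : ℂ) + σ) (𝓝[>] 0) (𝓝 1) :=
    (Continuous.tendsto' (by fun_prop) 0 1 (by simp)).mono_left nhdsWithin_le_nhds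
  refine tendsto_nhds_unique (hcont.tendsto.comp hadd)
    (((tendsto_LSeries_sub_of_tendsto_sum_sub_log_pow hnonneg hL').const_mul
      ((-1) ^ (l + 1))).congr' ?_)
  filter_upwards [self_mem_nhdsWithin] with σ (hσ : 0 < σ)
  exact (iteratedDeriv_logDeriv_riemannZeta₁ l (by simpa using hσ)).symm

lemma liFunctional_logDeriv_riemannZeta₁ {L : ℕ → ℝ}
    (hL : ∀ l : ℕ, Tendsto (fun N : ℕ => ∑ k ∈ Icc 2 N, Λ k * Real.log k ^ l / k -
      Real.log N ^ (l + 1) / (l + 1)) atTop (𝓝 (L l))) (n : ℕ) :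
    liFunctional n (logDeriv riemannZeta₁) =
      ((-∑ l ∈ Icc 1 n, (n.choose l : ℝ) * ((-1 : ℝ) ^ (l - 1) / ((l - 1).factorial : ℝ)) *
        L (l - 1) : ℝ) : ℂ) := by
  rw [liFunctional, ← sum_neg_distrib, ofReal_sum]
  refine sum_congr rfl fun l _ => ?_
  rw [iteratedDeriv_logDeriv_riemannZeta₁_one (hL (l - 1))]
  push_cast
  ring

end VonMangoldt

/-- **The Bombieri–Lagarias arithmetic formula** (Theorem 2.2 for `F = ζ`): if `L_l` is the
limit of `∑_{k=2}^N Λ(k)(log k)^l / k − (log N)^{l+1}/(l+1)` as `N → ∞`, then for `n ≥ 1`,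
`λ_n = 1 − (n/2)(γ + log(4π)) − ∑_{l=1}^n C(n,l)((−1)^{l−1}/(l−1)!) L_{l−1}
  + ∑_{j=2}^n (−1)^j C(n,j)(1 − 2^{−j}) ζ(j)`; in particular `λ_n` is real. -/
theorem li_coeff_arithmetic_formula (L : ℕ → ℝ)
    (hL : ∀ l : ℕ, Filter.Tendsto
      (fun N : ℕ => (∑ k ∈ Finset.Icc 2 N,
          ArithmeticFunction.vonMangoldt k * (Real.log k) ^ l / k) -
        (Real.log N) ^ (l + 1) / (l + 1))
      Filter.atTop (𝓝 (L l))) :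
    ∀ n : ℕ, 1 ≤ n →
      liCoeff n = ((1 - ((n : ℝ) / 2) *
          (Real.eulerMascheroniConstant + Real.log (4 * Real.pi)) -
        (∑ l ∈ Finset.Icc 1 n, (n.choose l : ℝ) *
          ((-1 : ℝ) ^ (l - 1) / ((l - 1).factorial : ℝ)) * L (l - 1)) +
        (∑ j ∈ Finset.Icc 2 n, (-1 : ℝ) ^ j * (n.choose j : ℝ) *
          (1 - (2 : ℝ) ^ (-(j : ℤ))) * (∑' m : ℕ, 1 / ((m : ℝ) + 1) ^ j)) : ℝ) : ℂ) := by
  intro n hn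
  rw [liCoeff_eq_add (by lia), liFunctional_logDeriv_Gammaℝ (by lia),
    liFunctional_logDeriv_riemannZeta₁ hL]
  push_cast
  ring
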